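/- Let n ≥ 4. Then D_lir(C_n) = 0 if n ≡ 0 (mod 4), D_lir(C_n) = 1 if n ≡ 1 (mod 4), and D_lir(C_n) = 2 if n ≡ 2 or 3 (mod 4). Concretely: the cycle C_n admits a valid doubling-coloring (D, c) with |D| equal to the stated value, and admits none with |D| strictly smaller. -/

import Mathlib

open Finset
open scoped Classical

/-- The weighted degree of vertex `v` in color `i`: each edge incident to `v` colored `i`
counts 2 if it is doubled (lies in `D`) and 1 otherwise. -/
noncomputable def wdeg {V : Type*} [Fintype V] (G : SimpleGraph V)
    (D : Finset (Sym2 V)) (c : Sym2 V → Fin 2) (i : Fin 2) (v : V) : ℕ :=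
  ∑ w ∈ Finset.univ.filter (fun w => G.Adj v w ∧ c s(v, w) = i),
    (if s(v, w) ∈ D then 2 else 1)

/-- `(D, c)` is a valid doubling-coloring of `G`. -/
def ValidDC {V : Type*} [Fintype V] (G : SimpleGraph V)
    (D : Finset (Sym2 V)) (c : Sym2 V → Fin 2) : Prop :=
  ↑D ⊆ G.edgeSet ∧
    ∀ u v, G.Adj u v →
      wdeg G D c (c s(u, v)) u ≠ wdeg G D c (c s(u, v)) v

/-!
Label each edge of the cycle by its first endpoint. The two end vertices of an edge `f` share `f`,
so `f` is satisfied iff the edges `e`, `g` before and after it contribute differently to the color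
of `f`: either `e` and `g` have different colors, or `e`, `f`, `g` have the same color and exactly
one of `e`, `g` is doubled. Call the second case a repeat.

Going around the cycle the color changes an even number of times. A non-repeat sees exactly one
change among its two consecutive steps and a repeat sees none, so `n = 2 * changes + repeats` and
the number of repeats is congruent to `n` modulo 4. Without doubled edges there is no repeat, and
a single doubled edge allows at most one, since repeats on both of its sides would force another
one centered at it. Conversely, `n % 4 + 2` edges of one color followed by alternating runs of
length two have `n % 4 ≤ 3` consecutive repeats, for which `min (n % 4) 2` doubled edges suffice.
-/

section CyclicSequence

variable {ι : Type*} [Fintype ι] {σ : Equiv.Perm ι} {S : Finset ι} {x : ι → Fin 2} {v : ι}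

lemma even_card_apply_perm_ne (σ : Equiv.Perm ι) (x : ι → Fin 2) :
    Even #{v | x (σ v) ≠ x v} := by
  have indicator_eq_sub : ∀ a b : Fin 2,
      (if a ≠ b then 1 else 0 : ZMod 2) = (a : ℕ) - (b : ℕ) := by decide
  rw [← ZMod.natCast_eq_zero_iff_even, natCast_card_filter]
  simp only [indicator_eq_sub, sum_sub_distrib]
  rw [Equiv.sum_comp σ (fun v => ((x v : ℕ) : ZMod 2)), sub_self]

/-- The positions at which the sequence `x`, read along the orbits of `σ`, takes the same value
two steps later. -/
def repeats (σ : Equiv.Perm ι) (x : ι → Fin 2) : Finset ι :=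
  {v | x (σ (σ v)) = x v}

@[simp]
lemma mem_repeats : v ∈ repeats σ x ↔ x (σ (σ v)) = x v := by
  simp [repeats]

lemma two_mul_card_apply_ne_add_card_repeats (h : ∀ v ∈ repeats σ x, x (σ v) = x v) :
    2 * #{v | x (σ v) ≠ x v} + #(repeats σ x) = Fintype.card ι := by
  have steps (v : ι) : (if x (σ v) ≠ x v then 1 else 0) +
      (if x (σ (σ v)) ≠ x (σ v) then 1 else 0) + (if x (σ (σ v)) = x v then 1 else 0) = 1 := by
    have := h v
    rw [mem_repeats] at this
    split_ifs <;> omega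
  calc
    _ = ∑ v, ((if x (σ v) ≠ x v then 1 else 0) +
          (if x (σ (σ v)) ≠ x (σ v) then 1 else 0) + (if x (σ (σ v)) = x v then 1 else 0)) := by
      rw [sum_add_distrib, sum_add_distrib,
        Equiv.sum_comp σ (fun v => if x (σ v) ≠ x v then 1 else 0), repeats, card_filter,
        card_filter, two_mul]
    _ = Fintype.card ι := by simp only [steps, sum_const, card_univ, smul_eq_mul, mul_one]

lemma card_repeats_modEq_card (h : ∀ v ∈ repeats σ x, x (σ v) = x v) :
    #(repeats σ x) ≡ Fintype.card ι [MOD 4] := by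
  obtain ⟨k, hk⟩ := even_card_apply_perm_ne σ x
  have := two_mul_card_apply_ne_add_card_repeats h
  unfold Nat.ModEq
  omega

/-- The condition on the colors `x` and the set `S` of doubled edges of a union of cycles that
expresses validity, where `v` stands for the edge from `v` to `σ v`. -/
def IsAdmissible (σ : Equiv.Perm ι) (S : Finset ι) (x : ι → Fin 2) : Prop :=
  ∀ v ∈ repeats σ x, x (σ v) = x v ∧ Xor (v ∈ S) (σ (σ v) ∈ S)

namespace IsAdmissible

lemma mem_or_mem (h : IsAdmissible σ S x) (hv : v ∈ repeats σ x) : v ∈ S ∨ σ (σ v) ∈ S :=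
  Xor.or (h v hv).2

lemma repeats_eq_empty (h : IsAdmissible σ ∅ x) : repeats σ x = ∅ :=
  eq_empty_of_forall_notMem fun v hv => by simpa using h.mem_or_mem hv

lemma apply_apply_notMem_repeats (h : IsAdmissible σ S x) (hS : #S ≤ 1) (hv : v ∈ repeats σ x)
    (hvS : σ (σ v) ∈ S) : σ (σ v) ∉ repeats σ x := by
  intro hv'
  have middle_mem : σ v ∈ repeats σ x := by
    rw [mem_repeats, (h _ hv').1, mem_repeats.1 hv, (h v hv).1]
  have fixed : σ v = v := by
    rcases h.mem_or_mem middle_mem with hmem | hmem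
    · exact (σ.injective (card_le_one.1 hS _ hmem _ hvS)).symm
    · exact σ.injective (σ.injective (card_le_one.1 hS _ hmem _ hvS))
  have hxor := (h v hv).2
  rw [fixed, fixed, xor_self] at hxor
  exact hxor

lemma card_repeats_le_one (h : IsAdmissible σ S x) (hS : #S ≤ 1) : #(repeats σ x) ≤ 1 := by
  refine card_le_one.2 fun v hv w hw => ?_
  rcases h.mem_or_mem hv with hvS | hvS <;> rcases h.mem_or_mem hw with hwS | hwS <;>
    have heq := card_le_one.1 hS _ hvS _ hwS
  · exact heq
  · exact absurd (heq ▸ hv) (h.apply_apply_notMem_repeats hS hw hwS)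
  · exact absurd (heq ▸ hw) (h.apply_apply_notMem_repeats hS hv hvS)
  · exact σ.injective (σ.injective heq)

theorem min_card_mod_four_two_le (h : IsAdmissible σ S x) : min (Fintype.card ι % 4) 2 ≤ #S := by
  have hmod : #(repeats σ x) % 4 = Fintype.card ι % 4 :=
    card_repeats_modEq_card fun v hv => (h v hv).1
  have hzero : #S = 0 → #(repeats σ x) = 0 := fun hS => by
    obtain rfl := card_eq_zero.1 hS
    rw [h.repeats_eq_empty, card_empty]
  have hone := h.card_repeats_le_one
  omega

end IsAdmissible

end CyclicSequence

section EdgeWeight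

variable {V : Type*} {D : Finset (Sym2 V)} {c : Sym2 V → Fin 2}

/-- The contribution of the edge `e` to the weighted degree in color `i` of its end vertices. -/
noncomputable def edgeWeight (D : Finset (Sym2 V)) (c : Sym2 V → Fin 2) (i : Fin 2)
    (e : Sym2 V) : ℕ :=
  if c e = i then if e ∈ D then 2 else 1 else 0

lemma wdeg_eq_sum_edgeWeight [Fintype V] (G : SimpleGraph V) (i : Fin 2) (v : V) :
    wdeg G D c i v = ∑ w with G.Adj v w, edgeWeight D c i s(v, w) := by
  simp only [wdeg, edgeWeight, ← filter_filter, sum_filter]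

lemma edgeWeight_ne_edgeWeight_iff {e f g : Sym2 V} :
    edgeWeight D c (c f) e ≠ edgeWeight D c (c f) g ↔
      (c g = c e → c f = c e ∧ Xor (e ∈ D) (g ∈ D)) := by
  unfold edgeWeight Xor
  split_ifs <;> simp_all <;> omega

end EdgeWeight

/-- The permutation `σ` orients the 2-regular graph `G` along its cycles: the neighbors of `v` are
its successor `σ v` and its predecessor `σ⁻¹ v`, and these are distinct. -/
structure IsCyclicOrientation {V : Type*} (G : SimpleGraph V) (σ : Equiv.Perm V) : Prop where
  adj_iff : ∀ {u v}, G.Adj u v ↔ v = σ u ∨ u = σ v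
  apply_apply_ne : ∀ v, σ (σ v) ≠ v

namespace IsCyclicOrientation

variable {V : Type*} {G : SimpleGraph V} {σ : Equiv.Perm V}

/-- The edge from a vertex to its successor, by which the edges of `G` are indexed. -/
def outEdge (h : IsCyclicOrientation G σ) : V ↪ Sym2 V where
  toFun v := s(v, σ v)
  inj' u v huv := by
    rcases Sym2.eq_iff.1 huv with ⟨huv, -⟩ | ⟨hu, hv⟩
    · exact huv
    · exact absurd (by rw [← hu, hv]) (h.apply_apply_ne v)

lemma outEdge_apply (h : IsCyclicOrientation G σ) (v : V) : h.outEdge v = s(v, σ v) := rfl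

lemma range_outEdge (h : IsCyclicOrientation G σ) : Set.range h.outEdge = G.edgeSet := by
  ext e
  induction e using Sym2.ind with
  | _ u v =>
    simp only [Set.mem_range, outEdge_apply, SimpleGraph.mem_edgeSet, h.adj_iff, Sym2.eq_iff]
    constructor
    · rintro ⟨w, ⟨rfl, rfl⟩ | ⟨rfl, rfl⟩⟩ <;> simp
    · rintro (rfl | rfl)
      · exact ⟨u, Or.inl ⟨rfl, rfl⟩⟩
      · exact ⟨v, Or.inr ⟨rfl, rfl⟩⟩

lemma forall_adj_iff (h : IsCyclicOrientation G σ) {p : V → V → Prop}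
    (hp : ∀ {u v}, p u v → p v u) :
    (∀ u v, G.Adj u v → p u v) ↔ ∀ v, p v (σ v) := by
  refine ⟨fun H v => H _ _ (h.adj_iff.2 (Or.inl rfl)), fun H u v huv => ?_⟩
  rcases h.adj_iff.1 huv with rfl | rfl
  · exact H u
  · exact hp (H v)

variable [Fintype V] {D : Finset (Sym2 V)} {c : Sym2 V → Fin 2}

lemma wdeg_apply (h : IsCyclicOrientation G σ) (i : Fin 2) (v : V) :
    wdeg G D c i (σ v) =
      edgeWeight D c i (h.outEdge v) + edgeWeight D c i (h.outEdge (σ v)) := by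
  have neighbors : ({w | G.Adj (σ v) w} : Finset V) = {v, σ (σ v)} := by
    ext w
    simp [h.adj_iff, or_comm, eq_comm]
  rw [wdeg_eq_sum_edgeWeight, neighbors, sum_pair (h.apply_apply_ne v).symm, Sym2.eq_swap,
    outEdge_apply, outEdge_apply]

lemma validDC_map_iff (h : IsCyclicOrientation G σ) {S : Finset V} :
    ValidDC G (S.map h.outEdge) c ↔ IsAdmissible σ S (c ∘ h.outEdge) := by
  have map_subset : (S.map h.outEdge : Set (Sym2 V)) ⊆ G.edgeSet := by
    rw [coe_map, ← h.range_outEdge]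
    exact Set.image_subset_range _ _
  rw [ValidDC, and_iff_right map_subset,
    h.forall_adj_iff (fun huv => by rw [Sym2.eq_swap]; exact huv.symm),
    σ.surjective.forall]
  refine forall_congr' fun v => ?_
  rw [h.wdeg_apply, h.wdeg_apply, add_comm, Ne, add_right_inj, ← h.outEdge_apply,
    ← Ne, edgeWeight_ne_edgeWeight_iff]
  simp only [mem_map', mem_repeats, Function.comp_apply]

lemma exists_validDC_card_iff (h : IsCyclicOrientation G σ) {k : ℕ} :
    (∃ D c, ValidDC G D c ∧ #D = k) ↔ ∃ S x, IsAdmissible σ S x ∧ #S = k := by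
  constructor
  · rintro ⟨D, c, hD, rfl⟩
    obtain ⟨S, -, rfl⟩ : ∃ S ⊆ univ, D = S.map h.outEdge := by
      rw [← subset_map_iff, ← coe_subset, coe_map, coe_univ, Set.image_univ, h.range_outEdge]
      exact hD.1
    exact ⟨S, c ∘ h.outEdge, h.validDC_map_iff.1 hD, (card_map _).symm⟩
  · rintro ⟨S, x, hS, rfl⟩
    refine ⟨S.map h.outEdge, Function.extend h.outEdge x 0, h.validDC_map_iff.2 ?_, card_map _⟩
    rwa [Function.extend_comp h.outEdge.injective]

end IsCyclicOrientation

lemma val_finRotate {n : ℕ} (v : Fin n) :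
    (finRotate n v : ℕ) = if (v : ℕ) + 1 = n then 0 else (v : ℕ) + 1 := by
  cases n with
  | zero => exact v.elim0
  | succ n => simp only [coe_finRotate, Fin.ext_iff, Fin.val_last, Nat.add_right_cancel_iff]

lemma cycleGraph_adj_iff_finRotate {n : ℕ} (hn : 2 ≤ n) {u v : Fin n} :
    (SimpleGraph.cycleGraph n).Adj u v ↔ v = finRotate n u ∨ u = finRotate n v := by
  obtain ⟨n, rfl⟩ := Nat.exists_eq_add_of_le' hn
  rw [SimpleGraph.cycleGraph_adj, finRotate_apply, finRotate_apply, sub_eq_iff_eq_add',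
    sub_eq_iff_eq_add', or_comm]

lemma isCyclicOrientation_cycleGraph {n : ℕ} (hn : 3 ≤ n) :
    IsCyclicOrientation (SimpleGraph.cycleGraph n) (finRotate n) where
  adj_iff := cycleGraph_adj_iff_finRotate (by omega)
  apply_apply_ne v := by
    rw [Ne, Fin.ext_iff, val_finRotate, val_finRotate]
    split_ifs <;> omega

lemma exists_isAdmissible_finRotate {n : ℕ} (hn : 4 ≤ n) :
    ∃ S x, IsAdmissible (finRotate n) S x ∧ #S = min (n % 4) 2 := by
  -- `v - n % 4` truncates to zero, so that the coloring starts with `n % 4 + 2` zeros. The repeats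
  -- are then the positions below `n % 4`; position `k` needs one of `k` and `k + 2` in the set.
  refine ⟨(Ico 2 (2 + min (n % 4) 2)).attachFin fun k hk => by rw [mem_Ico] at hk; omega,
    fun v => Fin.ofNat 2 ((v - n % 4) / 2), fun v hv => ?_, by simp⟩
  have := v.isLt
  simp only [mem_repeats, Fin.ext_iff, Fin.val_ofNat, val_finRotate, mem_attachFin, mem_Ico,
    Xor] at hv ⊢
  split_ifs at hv ⊢ <;> omega

/-- For `n ≥ 4`, `D_lir(C_n)` equals `0` if `n ≡ 0 (mod 4)`, `1` if `n ≡ 1 (mod 4)`,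
and `2` otherwise: there is a valid doubling-coloring with that many doubled edges,
and none with fewer. -/
theorem Dlir_cycleGraph (n : ℕ) (hn : 4 ≤ n) :
    (∃ (D : Finset (Sym2 (Fin n))) (c : Sym2 (Fin n) → Fin 2),
        ValidDC (SimpleGraph.cycleGraph n) D c ∧
        D.card = (if n % 4 = 0 then 0 else if n % 4 = 1 then 1 else 2)) ∧
    (∀ (D : Finset (Sym2 (Fin n))) (c : Sym2 (Fin n) → Fin 2),
        ValidDC (SimpleGraph.cycleGraph n) D c →
        (if n % 4 = 0 then 0 else if n % 4 = 1 then 1 else 2) ≤ D.card) := by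
  have hcycle := isCyclicOrientation_cycleGraph (n := n) (by omega)
  have hvalue : (if n % 4 = 0 then 0 else if n % 4 = 1 then 1 else 2) = min (n % 4) 2 := by
    split_ifs <;> omega
  rw [hvalue]
  refine ⟨hcycle.exists_validDC_card_iff.2 (exists_isAdmissible_finRotate hn), fun D c hD => ?_⟩
  obtain ⟨S, x, hS, hcard⟩ := hcycle.exists_validDC_card_iff.1 ⟨D, c, hD, rfl⟩
  simpa only [hcard, Fintype.card_fin] using hS.min_card_mod_four_two_le
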